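/- Let n ≥ 3 be an integer and p > 1 with n = 2p/(p−1). Then there exist γ > 0 and c ≥ 2, and for these there exist R₀ > 1 and ε₀ ∈ (0,1), such that for every R ≥ R₀ and every ε ∈ (0, ε₀], the function ψ(r,t) = ((r−ε)(R−r))^{−2/(p−1)} · (1+r)^{2/(p−1)} · (1 + (R² / log(c r/ε))^{1/(p−1)}) · exp(γ(t+1)) satisfies ψ_rr + ((n−1)/r) ψ_r − ψ^p − ψ_t ≤ 0 for all r ∈ (ε, R) and all t > 0. -/

import Mathlib

/-- The supersolution `ψ_{R,ε}(r,t)` used in the borderline case `n = 2p/(p-1)`. -/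
noncomputable def psiSupLog (p γ c R ε r t : ℝ) : ℝ :=
  ((r - ε) * (R - r)) ^ (-2 / (p - 1)) * (1 + r) ^ (2 / (p - 1))
    * (1 + (R ^ 2 / Real.log (c * r / ε)) ^ (1 / (p - 1))) * Real.exp (γ * (t + 1))

/-- The polynomial estimate behind the supersolution property. The variables `x, y, z, w, l` stand
for `1/(r-ε)`, `1/(R-r)`, `1/(1+r)`, `1/r`, `1/log(2r/ε)`. -/
lemma log_deriv_polynomial_bound {a x y z w l θ Φ : ℝ} (ha : 1 ≤ 2 * a) (hw : 0 < w)
    (hwx : w ≤ x) (hy : 0 < y) (hz : 0 < z) (hz1 : z ≤ 1) (hl : 0 < l) (hl2 : l ≤ 2)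
    (hθ : 0 ≤ θ) (hθ1 : θ ≤ 1) (hxl : x * (x - w) ≤ 2 * (x ^ 2 * l))
    (hΦy : y ^ 2 ≤ Φ) (hΦx : x ^ 2 * l ≤ Φ) :
    (2 * a * x ^ 2 + 2 * a * y ^ 2 - 2 * a * z ^ 2
        + θ * (a ^ 2 * (1 - θ) * w ^ 2 * l ^ 2 + a * w ^ 2 * l + a * w ^ 2 * l ^ 2))
      + (-2 * a * x + 2 * a * y + 2 * a * z - a * θ * w * l) ^ 2
      + (1 + 2 * a) * w * (-2 * a * x + 2 * a * y + 2 * a * z - a * θ * w * l)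
      ≤ (4 * a * (2 * a + 1) + 2 * a * (2 * a + 1) + 4 * a ^ 2
          + (a + 2 * a * (a + 1) + 4 * a ^ 2)) * Φ + 8 * a ^ 2 := by
  have ha0 : 0 < a := by linarith
  have hx : 0 < x := by linarith
  have hw2 : w ^ 2 ≤ x ^ 2 := by gcongr
  have hwl : w ^ 2 * l ≤ x ^ 2 * l := by gcongr
  have hwl2 : w ^ 2 * l ^ 2 ≤ 2 * (x ^ 2 * l) := by
    calc w ^ 2 * l ^ 2 = (w ^ 2 * l) * l := by ring
      _ ≤ (x ^ 2 * l) * 2 := by gcongr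
      _ = _ := by ring
  have hxwl : x * w * l ≤ x ^ 2 * l := by
    calc x * w * l ≤ x * x * l := by gcongr
      _ = _ := by ring
  have e1 : 2 * a * (2 * a + 1) * (x * (x - w)) ≤ 2 * a * (2 * a + 1) * (2 * Φ) := by
    have : x * (x - w) ≤ 2 * Φ := by linarith
    gcongr
  have e2 : 2 * a * (2 * a + 1) * y ^ 2 ≤ 2 * a * (2 * a + 1) * Φ := by gcongr
  have e3 : (2 * a * (2 * a + 1) * w - 8 * a ^ 2 * x) * (y + z) ≤ 0 := by
    apply mul_nonpos_of_nonpos_of_nonneg _ (by positivity)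
    have h1 : 2 * a * (2 * a + 1) * w ≤ 2 * a * (2 * a + 2 * a) * x := by gcongr
    linarith
  have e4 : 2 * a * (2 * a - 1) * z ^ 2 ≤ 2 * a * (2 * a - 1) * 1 := by
    have : 0 ≤ 2 * a - 1 := by linarith
    gcongr
    nlinarith
  have e5 : 8 * a ^ 2 * (y * z) ≤ 4 * a ^ 2 * (Φ + 1) := by
    have : 2 * (y * z) ≤ Φ + 1 := by nlinarith [sq_nonneg (y - z)]
    nlinarith [sq_nonneg a]
  have e6 : θ * (a * (w ^ 2 * l) + a * (a + 1) * (w ^ 2 * l ^ 2) + 4 * a ^ 2 * (x * w * l))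
      ≤ 1 * (a * Φ + a * (a + 1) * (2 * Φ) + 4 * a ^ 2 * Φ) := by
    have f1 : w ^ 2 * l ≤ Φ := by linarith
    have f2 : w ^ 2 * l ^ 2 ≤ 2 * Φ := by linarith
    have f3 : x * w * l ≤ Φ := by linarith
    gcongr
  have n1 : 0 ≤ θ * ((1 + 2 * a) * a * (w ^ 2 * l) + 4 * a ^ 2 * (y * w * l)
      + 4 * a ^ 2 * (z * w * l)) := by positivity
  linarith

open Real in
lemma hasDerivAt_log_two_mul_div {ε r : ℝ} (hε : 0 < ε) (hr0 : 0 < r) :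
    HasDerivAt (fun s => log (2 * s / ε)) r⁻¹ r := by
  have := (((hasDerivAt_id' r).const_mul 2).div_const ε).log (by positivity)
  convert this using 1
  field_simp

open Real in
lemma hasDerivAt_div_log_rpow {a R ε r : ℝ} (hR : 0 < R) (hε : 0 < ε) (hr : ε < r) :
    HasDerivAt (fun s => (R ^ 2 / log (2 * s / ε)) ^ a)
      (-a * (R ^ 2 / log (2 * r / ε)) ^ a * r⁻¹ * (log (2 * r / ε))⁻¹) r := by
  have hr0 : 0 < r := by linarith
  have hL : 0 < log (2 * r / ε) := log_pos (by rw [lt_div_iff₀ hε]; linarith)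
  have hX : 0 < R ^ 2 / log (2 * r / ε) := by positivity
  have := ((hasDerivAt_const r (R ^ 2)).fun_div (hasDerivAt_log_two_mul_div hε hr0)
    hL.ne').rpow_const (p := a) (Or.inl hX.ne')
  convert this using 1
  rw [rpow_sub_one hX.ne']
  field_simp
  ring

open Real in
/-- The logarithmic derivative in `r` of `psiSupLog p γ 2 R ε`. -/
lemma hasDerivAt_psiSupLog {p γ R ε r t : ℝ} (hp : 1 < p) (hε : 0 < ε)
    (hR : 0 < R) (hr : ε < r) (hrR : r < R) :
    HasDerivAt (fun s => psiSupLog p γ 2 R ε s t)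
      (psiSupLog p γ 2 R ε r t * (-2 * (1 / (p - 1)) * (r - ε)⁻¹ + 2 * (1 / (p - 1)) * (R - r)⁻¹
        + 2 * (1 / (p - 1)) * (1 + r)⁻¹
        - 1 / (p - 1) * ((R ^ 2 / log (2 * r / ε)) ^ (1 / (p - 1))
            / (1 + (R ^ 2 / log (2 * r / ε)) ^ (1 / (p - 1)))) * r⁻¹ * (log (2 * r / ε))⁻¹)) r := by
  have hr0 : 0 < r := by linarith
  have hq : 0 < p - 1 := by linarith
  have hL : 0 < log (2 * r / ε) := log_pos (by rw [lt_div_iff₀ hε]; linarith)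
  have h1 : 0 < r - ε := by linarith
  have h2 : 0 < R - r := by linarith
  have h3 : 0 < 1 + r := by linarith
  have hX : 0 < R ^ 2 / log (2 * r / ε) := by positivity
  have dX := hasDerivAt_div_log_rpow (a := 1 / (p - 1)) hR hε hr
  have dF : HasDerivAt (fun s => ((s - ε) * (R - s)) ^ (-2 / (p - 1)))
      (((r - ε) * (R - r)) ^ (-2 / (p - 1)) *
        (-2 * (1 / (p - 1)) * (r - ε)⁻¹ + 2 * (1 / (p - 1)) * (R - r)⁻¹)) r := by
    have hne : (r - ε) * (R - r) ≠ 0 := by positivity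
    have := ((((hasDerivAt_id' r).sub_const ε).fun_mul ((hasDerivAt_id' r).const_sub R))).rpow_const
      (p := -2 / (p - 1)) (Or.inl hne)
    convert this using 1
    rw [rpow_sub_one hne]
    field_simp
    ring
  have dH : HasDerivAt (fun s => (1 + s) ^ (2 / (p - 1)))
      ((1 + r) ^ (2 / (p - 1)) * (2 * (1 / (p - 1)) * (1 + r)⁻¹)) r := by
    have := ((hasDerivAt_id' r).const_add 1).rpow_const (p := 2 / (p - 1)) (Or.inl h3.ne')
    convert this using 1
    rw [rpow_sub_one h3.ne']
    field_simp
  have key := ((dF.fun_mul dH).fun_mul (dX.const_add 1)).mul_const (exp (γ * (t + 1)))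
  refine key.congr_deriv ?_
  have hXa := rpow_pos_of_pos hX (1 / (p - 1))
  simp only [psiSupLog]
  generalize (R ^ 2 / log (2 * r / ε)) ^ (1 / (p - 1)) = Y at *
  generalize log (2 * r / ε) = L at *
  generalize ((r - ε) * (R - r)) ^ (-2 / (p - 1)) = A
  generalize (1 + r) ^ (2 / (p - 1)) = B
  field_simp
  ring

open Real in
/-- The derivative of the logarithmic derivative of `psiSupLog p γ 2 R ε` in `r`. -/
lemma hasDerivAt_logDeriv_psiSupLog {a R ε r θ : ℝ} (hε : 0 < ε)
    (hR : 0 < R) (hr : ε < r) (hrR : r < R)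
    (hθ : θ = (R ^ 2 / log (2 * r / ε)) ^ a / (1 + (R ^ 2 / log (2 * r / ε)) ^ a)) :
    HasDerivAt (fun s => -2 * a * (s - ε)⁻¹ + 2 * a * (R - s)⁻¹ + 2 * a * (1 + s)⁻¹
        - a * ((R ^ 2 / log (2 * s / ε)) ^ a
            / (1 + (R ^ 2 / log (2 * s / ε)) ^ a)) * s⁻¹ * (log (2 * s / ε))⁻¹)
      (2 * a * (r - ε)⁻¹ ^ 2 + 2 * a * (R - r)⁻¹ ^ 2 - 2 * a * (1 + r)⁻¹ ^ 2
        + θ * (a ^ 2 * (1 - θ) * r⁻¹ ^ 2 * (log (2 * r / ε))⁻¹ ^ 2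
          + a * r⁻¹ ^ 2 * (log (2 * r / ε))⁻¹ + a * r⁻¹ ^ 2 * (log (2 * r / ε))⁻¹ ^ 2)) r := by
  have hr0 : 0 < r := by linarith
  have hL : 0 < log (2 * r / ε) := log_pos (by rw [lt_div_iff₀ hε]; linarith)
  have h1 : 0 < r - ε := by linarith
  have h2 : 0 < R - r := by linarith
  have h3 : 0 < 1 + r := by linarith
  have hX : 0 < R ^ 2 / log (2 * r / ε) := by positivity
  have dlog := hasDerivAt_log_two_mul_div hε hr0
  have dX := hasDerivAt_div_log_rpow (a := a) hR hε hr
  have hXa := rpow_pos_of_pos hX a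
  have hXa1 : 1 + (R ^ 2 / log (2 * r / ε)) ^ a ≠ 0 := by positivity
  have d1 := (((hasDerivAt_id' r).sub_const ε).fun_inv h1.ne').const_mul (-2 * a)
  have d2 := (((hasDerivAt_id' r).const_sub R).fun_inv h2.ne').const_mul (2 * a)
  have d3 := (((hasDerivAt_id' r).const_add 1).fun_inv h3.ne').const_mul (2 * a)
  have d4 := (((dX.fun_div (dX.const_add 1) hXa1).const_mul a).fun_mul
    ((hasDerivAt_id' r).fun_inv hr0.ne')).fun_mul (dlog.fun_inv hL.ne')
  refine (((d1.fun_add d2).fun_add d3).fun_sub d4).congr_deriv ?_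
  subst hθ
  generalize (R ^ 2 / log (2 * r / ε)) ^ a = Y at *
  generalize log (2 * r / ε) = L at *
  field_simp
  ring

open Real in
/-- Lower bound for the absorption term `ψ^(p-1)`. -/
lemma psiSupLog_rpow_lower_bound {p γ R ε r t : ℝ} (hp : 1 < p) (hγ : 0 < γ) (hε : 0 < ε)
    (hr : ε < r) (hrR : r < R) (ht : 0 < t) :
    exp (γ * (p - 1)) * max ((R - r)⁻¹ ^ 2) ((r - ε)⁻¹ ^ 2 * (log (2 * r / ε))⁻¹)
      ≤ psiSupLog p γ 2 R ε r t ^ (p - 1) := by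
  have hr0 : 0 < r := by linarith
  have hR : 0 < R := by linarith
  have hq : 0 < p - 1 := by linarith
  have hL : 0 < log (2 * r / ε) := log_pos (by rw [lt_div_iff₀ hε]; linarith)
  have h1 : 0 < r - ε := by linarith
  have h2 : 0 < R - r := by linarith
  have h3 : 0 < 1 + r := by linarith
  have hX : 0 < R ^ 2 / log (2 * r / ε) := by positivity
  have hXa := rpow_pos_of_pos hX (1 / (p - 1))
  have hF : (((r - ε) * (R - r)) ^ (-2 / (p - 1))) ^ (p - 1)
      = (r - ε)⁻¹ ^ 2 * (R - r)⁻¹ ^ 2 := by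
    rw [← rpow_mul (by positivity), div_mul_cancel₀ _ hq.ne', rpow_neg (by positivity), rpow_two]
    field_simp
  have hH : ((1 + r) ^ (2 / (p - 1))) ^ (p - 1) = (1 + r) ^ 2 := by
    rw [← rpow_mul (by positivity), div_mul_cancel₀ _ hq.ne', rpow_two]
  have hE : exp (γ * (p - 1)) ≤ exp (γ * (t + 1)) ^ (p - 1) := by
    rw [← exp_mul]
    gcongr
    nlinarith
  have hg1 : 1 ≤ (1 + (R ^ 2 / log (2 * r / ε)) ^ (1 / (p - 1))) ^ (p - 1) :=
    one_le_rpow (by linarith) hq.le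
  have hgX : R ^ 2 / log (2 * r / ε)
      ≤ (1 + (R ^ 2 / log (2 * r / ε)) ^ (1 / (p - 1))) ^ (p - 1) := by
    calc R ^ 2 / log (2 * r / ε)
        = ((R ^ 2 / log (2 * r / ε)) ^ (1 / (p - 1))) ^ (p - 1) := by
          rw [← rpow_mul hX.le, div_mul_cancel₀ _ hq.ne', rpow_one]
      _ ≤ _ := by gcongr; linarith
  rw [psiSupLog, mul_rpow (by positivity) (by positivity), mul_rpow (by positivity) (by positivity),
    mul_rpow (by positivity) (by positivity), hF, hH,
    mul_comm _ (exp (γ * (t + 1)) ^ (p - 1))]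
  generalize (1 + (R ^ 2 / log (2 * r / ε)) ^ (1 / (p - 1))) ^ (p - 1) = g at *
  gcongr
  apply max_le
  · have : 1 ≤ (r - ε)⁻¹ ^ 2 * (1 + r) ^ 2 := by
      rw [← mul_pow]
      apply one_le_pow₀
      rw [inv_mul_eq_div, one_le_div h1]
      linarith
    calc (R - r)⁻¹ ^ 2 = (R - r)⁻¹ ^ 2 * 1 * 1 := by ring
      _ ≤ (R - r)⁻¹ ^ 2 * ((r - ε)⁻¹ ^ 2 * (1 + r) ^ 2) * g := by gcongr
      _ = _ := by ring
  · have e1 : 1 ≤ (R - r)⁻¹ ^ 2 * R ^ 2 := by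
      rw [← mul_pow]
      apply one_le_pow₀
      rw [inv_mul_eq_div, one_le_div h2]
      linarith
    have e2 : 1 ≤ (1 + r) ^ 2 := one_le_pow₀ (by linarith)
    calc (r - ε)⁻¹ ^ 2 * (log (2 * r / ε))⁻¹
        = (r - ε)⁻¹ ^ 2 * (log (2 * r / ε))⁻¹ * 1 * 1 := by ring
      _ ≤ (r - ε)⁻¹ ^ 2 * (log (2 * r / ε))⁻¹ * ((R - r)⁻¹ ^ 2 * R ^ 2) * (1 + r) ^ 2 := by gcongr
      _ = (r - ε)⁻¹ ^ 2 * (R - r)⁻¹ ^ 2 * (1 + r) ^ 2 * (R ^ 2 / log (2 * r / ε)) := by ring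
      _ ≤ _ := by gcongr

/-- for `n = 2p/(p-1)` there are `γ > 0`, `c ≥ 2`, and thresholds
`R₀ > 1`, `ε₀ ∈ (0,1)` such that the logarithmically corrected `ψ_{R,ε}` is a
supersolution for all `R ≥ R₀`, `ε ∈ (0,ε₀]`. -/
theorem psiSupLog_is_supersolution
    (n : ℕ) (hn : 3 ≤ n) (p : ℝ) (hp : 1 < p) (hnp : (n : ℝ) = 2 * p / (p - 1)) :
    ∃ γ > (0:ℝ), ∃ c ≥ (2:ℝ), ∃ R₀ > (1:ℝ), ∃ ε₀ ∈ Set.Ioo (0:ℝ) 1,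
      ∀ R ≥ R₀, ∀ ε ∈ Set.Ioc (0:ℝ) ε₀, ∀ r ∈ Set.Ioo ε R, ∀ t : ℝ, 0 < t →
        deriv (deriv fun s => psiSupLog p γ c R ε s t) r
          + (((n : ℝ) - 1) / r) * deriv (fun s => psiSupLog p γ c R ε s t) r
          - psiSupLog p γ c R ε r t ^ p
          - deriv (psiSupLog p γ c R ε r) t ≤ 0 := by
  have hq : 0 < p - 1 := by linarith
  obtain ⟨a, ha⟩ : ∃ a, a = 1 / (p - 1) := ⟨_, rfl⟩
  have hna : (n : ℝ) - 1 = 1 + 2 * a := by rw [hnp, ha]; field_simp; ring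
  have ha1 : 1 ≤ 2 * a := by
    have : (3 : ℝ) ≤ n := by exact_mod_cast hn
    linarith
  have ha0 : 0 < a := by linarith
  have haq : a * (p - 1) = 1 := by rw [ha]; field_simp
  obtain ⟨K, hK⟩ : ∃ K, K = 4 * a * (2 * a + 1) + 2 * a * (2 * a + 1) + 4 * a ^ 2
      + (a + 2 * a * (a + 1) + 4 * a ^ 2) := ⟨_, rfl⟩
  have hK0 : 0 < K := by rw [hK]; positivity
  obtain ⟨γ, hγ⟩ : ∃ γ, γ = 8 * a ^ 2 + a * K := ⟨_, rfl⟩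
  have hγ0 : 0 < γ := by rw [hγ]; positivity
  have hKγ : K ≤ Real.exp (γ * (p - 1)) := by
    have h1 : γ * (p - 1) = 8 * a + K := by
      rw [hγ]; linear_combination (8 * a + K) * haq
    have h2 := Real.add_one_le_exp (γ * (p - 1))
    linarith
  refine ⟨γ, hγ0, 2, le_rfl, 2, by norm_num, 1 / 2, by norm_num, ?_⟩
  rintro R hR ε ⟨hε, -⟩ r ⟨hr, hrR⟩ t ht
  have hR0 : 0 < R := by linarith
  have hr0 : 0 < r := by linarith
  have h1 : 0 < r - ε := by linarith
  have h2 : 0 < R - r := by linarith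
  have hlog2 : Real.log 2 ≤ Real.log (2 * r / ε) := by
    apply Real.log_le_log (by norm_num)
    rw [le_div_iff₀ hε]; linarith
  have hL2 : 1 / 2 < Real.log (2 * r / ε) := by linarith [Real.log_two_gt_d9]
  have hL : 0 < Real.log (2 * r / ε) := by linarith
  have hLle : Real.log (2 * r / ε) ≤ 2 * r / ε := by
    have := Real.log_le_sub_one_of_pos (show 0 < 2 * r / ε by positivity)
    linarith
  obtain ⟨θ, hθ⟩ : ∃ θ, θ = (R ^ 2 / Real.log (2 * r / ε)) ^ a
      / (1 + (R ^ 2 / Real.log (2 * r / ε)) ^ a) := ⟨_, rfl⟩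
  have hXa : 0 < (R ^ 2 / Real.log (2 * r / ε)) ^ a := by positivity
  have hθ0 : 0 ≤ θ := by rw [hθ]; positivity
  have hθ1 : θ ≤ 1 := by rw [hθ, div_le_one (by positivity)]; linarith
  have hψ : 0 < psiSupLog p γ 2 R ε r t := by
    rw [psiSupLog, ← ha]; positivity
  have dψ := fun s (hs : s ∈ Set.Ioo ε R) =>
    hasDerivAt_psiSupLog (γ := γ) (t := t) hp hε hR0 hs.1 hs.2
  simp only [← ha] at dψ
  have d1 := dψ r ⟨hr, hrR⟩
  have d2 := d1.mul (hasDerivAt_logDeriv_psiSupLog hε hR0 hr hrR hθ)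
  have hev : deriv (fun s => psiSupLog p γ 2 R ε s t) =ᶠ[nhds r] _ :=
    Filter.eventuallyEq_of_mem (Ioo_mem_nhds hr hrR) fun s hs => (dψ s hs).deriv
  have d2' := (d2.congr_of_eventuallyEq hev).deriv
  have dt : deriv (psiSupLog p γ 2 R ε r) t = psiSupLog p γ 2 R ε r t * γ := by
    have := ((((hasDerivAt_id' t).add_const 1).const_mul γ).exp).const_mul
      (((r - ε) * (R - r)) ^ (-2 / (p - 1)) * (1 + r) ^ (2 / (p - 1))
        * (1 + (R ^ 2 / Real.log (2 * r / ε)) ^ (1 / (p - 1))))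
    refine (HasDerivAt.deriv (f := psiSupLog p γ 2 R ε r) this).trans ?_
    simp only [psiSupLog]
    ring
  have hpow : psiSupLog p γ 2 R ε r t ^ p
      = psiSupLog p γ 2 R ε r t * psiSupLog p γ 2 R ε r t ^ (p - 1) := by
    rw [Real.rpow_sub_one hψ.ne']; field_simp
  have hΨ := psiSupLog_rpow_lower_bound hp hγ0 hε hr hrR ht
  obtain ⟨Φ, hΦ⟩ : ∃ Φ, Φ = max ((R - r)⁻¹ ^ 2) ((r - ε)⁻¹ ^ 2 * (Real.log (2 * r / ε))⁻¹) :=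
    ⟨_, rfl⟩
  have hΦ0 : 0 ≤ Φ := by rw [hΦ]; exact le_max_of_le_left (by positivity)
  have hS := log_deriv_polynomial_bound (a := a) (x := (r - ε)⁻¹) (y := (R - r)⁻¹)
    (z := (1 + r)⁻¹) (w := r⁻¹) (l := (Real.log (2 * r / ε))⁻¹) (θ := θ) (Φ := Φ) ha1
    (by positivity) (by gcongr; linarith) (by positivity) (by positivity)
    (inv_le_one_of_one_le₀ (by linarith)) (by positivity)
    (by rw [inv_le_comm₀ hL (by norm_num)]; linarith) hθ0 hθ1
    (by
      have e : (r - ε)⁻¹ * ((r - ε)⁻¹ - r⁻¹) = (r - ε)⁻¹ ^ 2 * (ε / r) := by field_simp; ring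
      have e' : ε / r ≤ 2 * (Real.log (2 * r / ε))⁻¹ := by
        rw [le_div_iff₀ hε] at hLle
        rw [← div_eq_mul_inv, div_le_div_iff₀ hr0 hL]
        linarith
      rw [e]
      calc (r - ε)⁻¹ ^ 2 * (ε / r) ≤ (r - ε)⁻¹ ^ 2 * (2 * (Real.log (2 * r / ε))⁻¹) := by gcongr
        _ = _ := by ring)
    (hΦ ▸ le_max_left _ _) (hΦ ▸ le_max_right _ _)
  rw [← hK] at hS
  rw [← hΦ] at hΨ
  have hKΦ : K * Φ ≤ psiSupLog p γ 2 R ε r t ^ (p - 1) :=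
    (mul_le_mul_of_nonneg_right hKγ hΦ0).trans hΨ
  have hγle : 8 * a ^ 2 ≤ γ := by rw [hγ]; linarith [mul_pos ha0 hK0]
  rw [d2', d1.deriv, dt, hpow, hna, ← hθ, div_eq_mul_inv (1 + 2 * a) r]
  have hfin := mul_le_mul_of_nonneg_left (hS.trans (add_le_add hKΦ hγle)) hψ.le
  linarith
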